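/- Let H₀ ∈ (0,1), K₀ ∈ (0,1], and set H = H₀K₀. Let R(t,s) = 2^{−K₀} ( (t^{2H₀} + s^{2H₀})^{K₀} − |t−s|^{2H₀K₀} ) for t,s ≥ 0 be the covariance function of one-dimensional bi-fractional Brownian motion B^{H₀,K₀}. Then there exists a constant κ_{H₀,K₀} > 0 such that for every integer m ≥ 1 and all times 0 < s₁,…,s_m, t < ∞: inf_{a∈ℝ^m} [ R(t,t) − 2 Σ_{j=1}^m a_j R(t,s_j) + Σ_{i=1}^m Σ_{j=1}^m a_i a_j R(s_i,s_j) ] ≥ κ_{H₀,K₀} · min{|t−s₁|^{2H},…,|t−s_m|^{2H}, t^{2H}}. Equivalently, for a centered Gaussian process B^{H₀,K₀} with covariance R, Var(B^{H₀,K₀}_t | B^{H₀,K₀}_{s₁},…,B^{H₀,K₀}_{s_m}) ≥ κ_{H₀,K₀} min{|t−s₁|^{2H},…,|t−s_m|^{2H}, t^{2H}}, i.e. bi-fractional Brownian motion satisfies strong local nondeterminism with index H = H₀K₀. -/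

import Mathlib

open Real
open scoped Topology

noncomputable section

/-- The covariance kernel of bi-fractional Brownian motion with parameters `H₀, K₀`. -/
def Rbifbm (H₀ K₀ t s : ℝ) : ℝ :=
  2 ^ (-K₀) * ((t ^ (2 * H₀) + s ^ (2 * H₀)) ^ K₀ - |t - s| ^ (2 * H₀ * K₀))

/-!
Write `N x y = |x - y| ^ α` with `α = 2 * H₀`. The power `|x| ^ α` is a mixture over scales `u` of
`1 - χ (u * x)`, where `χ` is a compactly supported positive definite bump. Dropping the bumps of
the scales `u ≥ 1 / r` leaves a conditionally negative definite kernel `N + Ψ`, where `Ψ` is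
positive semidefinite, vanishes at distance at least `r`, and has diagonal `d * r ^ α`.

With all exponentials taken entrywise, Schoenberg's theorem makes `G = exp (-(N + Ψ))` positive
semidefinite. The second summand of `exp (-N) = G + G * (exp Ψ - 1)` decouples a point `t` from all
points at distance at least `r`, so the quadratic form of `exp (-N)` is at least
`(1 - exp (-Ψ t t)) * c t ^ 2`. Rescaling `N` and `Ψ` by `u`, conditioning on the value at the
origin and integrating against `u ^ (-1 - K₀) du` turns the exponential kernel into the bifractional
one and the lower bound into `Ψ t t ^ K₀ * c t ^ 2`. For `K₀ = 1` the conditional negative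
definiteness of `N + Ψ` is applied directly to weights of total mass zero.
-/

open Filter Matrix MeasureTheory Set

section KernelForm

variable {X : Type*}

/-- The bilinear form `∑ x, ∑ y, c x * d y * k x y` that a kernel `k`, viewed as a matrix with a
possibly infinite index type, induces on finitely supported weights. When `k` is the covariance of a
centred process `B`, it is the covariance of `∑ x, c x * B x` and `∑ y, d y * B y`. -/
def kernelForm : Matrix X X ℝ →ₗ[ℝ] LinearMap.BilinForm ℝ (X →₀ ℝ) :=
  Finsupp.bilinearCombination ℝ ℝ ∘ₗ (Finsupp.bilinearCombination ℝ ℝ).compLeft X ∘ₗ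
    (ofLinearEquiv ℝ).symm.toLinearMap

theorem kernelForm_apply (k : Matrix X X ℝ) (c d : X →₀ ℝ) :
    kernelForm k c d = c.sum fun x a => d.sum fun y b => a * b * k x y := by
  simp [kernelForm, Finsupp.bilinearCombination_apply, Finsupp.linearCombination_apply,
    Finsupp.sum, Finset.mul_sum, mul_assoc]

theorem kernelForm_single_single (k : Matrix X X ℝ) (x y : X) (a b : ℝ) :
    kernelForm k (Finsupp.single x a) (Finsupp.single y b) = a * b * k x y := by
  simp [kernelForm_apply]

theorem kernelForm_comm {k : Matrix X X ℝ} (hk : k.IsSymm) (c d : X →₀ ℝ) :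
    kernelForm k c d = kernelForm k d c := by
  rw [kernelForm_apply, kernelForm_apply, Finsupp.sum_comm]
  simp only [hk.apply, mul_comm]

theorem kernelForm_vecMulVec (f g : X → ℝ) (c d : X →₀ ℝ) :
    kernelForm (vecMulVec f g) c d =
      Finsupp.linearCombination ℝ f c * Finsupp.linearCombination ℝ g d := by
  simp only [kernelForm_apply, vecMulVec_apply, Finsupp.linearCombination_apply, Finsupp.sum,
    smul_eq_mul, Finset.sum_mul_sum]
  exact Finset.sum_congr rfl fun x _ => Finset.sum_congr rfl fun y _ => mul_mul_mul_comm ..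

theorem kernelForm_single_right (k : Matrix X X ℝ) (c : X →₀ ℝ) (y : X) (b : ℝ) :
    kernelForm k c (Finsupp.single y b) = b * Finsupp.linearCombination ℝ (k.col y) c := by
  simp only [kernelForm_apply, zero_mul, mul_zero, Finsupp.sum_single_index,
    Finsupp.linearCombination_apply, Finsupp.mul_sum, Matrix.col_apply, smul_eq_mul]
  exact Finsupp.sum_congr fun x _ => by ring

theorem kernelForm_sub_single {k : Matrix X X ℝ} (hk : k.IsSymm) (c : X →₀ ℝ) (o : X) (z : ℝ) :
    kernelForm k (c - Finsupp.single o z) (c - Finsupp.single o z) =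
      kernelForm k c c - 2 * z * Finsupp.linearCombination ℝ (k.col o) c + z ^ 2 * k o o := by
  simp only [map_sub, LinearMap.sub_apply, kernelForm_comm hk (Finsupp.single o z) c,
    kernelForm_single_right k c, kernelForm_single_single]
  ring

theorem posSemidef_iff_kernelForm {k : Matrix X X ℝ} :
    k.PosSemidef ↔ k.IsSymm ∧ ∀ c, 0 ≤ kernelForm k c c := by
  simp only [Matrix.PosSemidef, Matrix.IsHermitian, conjTranspose_eq_transpose_of_trivial,
    Matrix.IsSymm, kernelForm_apply, star_trivial, mul_right_comm]

theorem posSemidef_vecMulVec_self (f : X → ℝ) : (vecMulVec f f).PosSemidef :=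
  posSemidef_iff_kernelForm.2 ⟨transpose_vecMulVec f f, fun c => by
    rw [kernelForm_vecMulVec]
    exact mul_self_nonneg _⟩

theorem apply_self_mul_sq_le_kernelForm {M : Matrix X X ℝ} (hM : M.PosSemidef) {c : X →₀ ℝ} {t : X}
    (hc : ∀ s ≠ t, c s * M t s = 0) : M t t * c t ^ 2 ≤ kernelForm M c c := by
  obtain ⟨hsymm, hnonneg⟩ := posSemidef_iff_kernelForm.1 hM
  have hcross : Finsupp.linearCombination ℝ (M.col t) (c.erase t) = 0 := by
    refine Finset.sum_eq_zero fun s hs => ?_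
    have hst : s ≠ t := fun h => by simp [h] at hs
    simpa [hst, hsymm.apply t s] using hc s hst
  have hsub := kernelForm_sub_single hsymm (c.erase t) t (-c t)
  rw [hcross, Finsupp.single_neg, sub_neg_eq_add, Finsupp.erase_add_single] at hsub
  linarith [hnonneg (c.erase t)]

theorem integrable_kernelForm {Ω : Type*} [MeasurableSpace Ω] {μ : Measure Ω}
    {F : Ω → Matrix X X ℝ} (hF : ∀ x y, Integrable (fun ω => F ω x y) μ) (c d : X →₀ ℝ) :
    Integrable (fun ω => kernelForm (F ω) c d) μ := by
  simp only [kernelForm_apply, Finsupp.sum]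
  exact integrable_finsetSum _ fun x _ => integrable_finsetSum _ fun y _ => (hF x y).const_mul _

theorem kernelForm_integral {Ω : Type*} [MeasurableSpace Ω] {μ : Measure Ω}
    {F : Ω → Matrix X X ℝ} (hF : ∀ x y, Integrable (fun ω => F ω x y) μ) (c d : X →₀ ℝ) :
    kernelForm (of fun x y => ∫ ω, F ω x y ∂μ) c d = ∫ ω, kernelForm (F ω) c d ∂μ := by
  simp only [kernelForm_apply, Finsupp.sum, of_apply]
  rw [integral_finsetSum _ fun x _ => integrable_finsetSum _ fun y _ => (hF x y).const_mul _]
  refine Finset.sum_congr rfl fun x _ => ?_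
  rw [integral_finsetSum _ fun y _ => (hF x y).const_mul _]
  simp only [integral_const_mul]

theorem posSemidef_integral {Ω : Type*} [MeasurableSpace Ω] {μ : Measure Ω}
    {F : Ω → Matrix X X ℝ} (hF : ∀ x y, Integrable (fun ω => F ω x y) μ)
    (hpos : ∀ ω, (F ω).PosSemidef) : (of fun x y => ∫ ω, F ω x y ∂μ).PosSemidef := by
  simp only [posSemidef_iff_kernelForm] at hpos ⊢
  refine ⟨IsSymm.ext fun x y => ?_, fun c => ?_⟩
  · simp only [of_apply, (hpos _).1.apply]
  · rw [kernelForm_integral hF]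
    exact integral_nonneg fun ω => (hpos ω).2 c

theorem posSemidef_of_hasSum {ι : Type*} {F : ι → Matrix X X ℝ} {M : Matrix X X ℝ}
    (hF : ∀ x y, HasSum (fun i => F i x y) (M x y)) (hpos : ∀ i, (F i).PosSemidef) :
    M.PosSemidef := by
  simp only [posSemidef_iff_kernelForm] at hpos ⊢
  refine ⟨IsSymm.ext fun x y => (hF y x).unique ?_, fun c => ?_⟩
  · simpa only [(hpos _).1.apply] using hF x y
  · have hsum : HasSum (fun i => kernelForm (F i) c c) (kernelForm M c c) := by
      simp only [kernelForm_apply, Finsupp.sum]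
      exact hasSum_sum fun x _ => hasSum_sum fun y _ => (hF x y).mul_left _
    exact hsum.nonneg fun i => (hpos i).2 c

end KernelForm

section EntrywiseExp

variable {X : Type*} {M : Matrix X X ℝ}

theorem posSemidef_map_pow (hM : M.PosSemidef) (n : ℕ) : (M.map (· ^ n)).PosSemidef := by
  induction n with
  | zero => simpa [vecMulVec, Matrix.map] using posSemidef_vecMulVec_self (1 : X → ℝ)
  | succ n ih =>
    have hsucc : M.map (· ^ (n + 1)) = M.map (· ^ n) ⊙ M := by
      ext x y
      simp [pow_succ]
    exact hsucc ▸ ih.hadamard hM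

theorem posSemidef_map_exp_sub_one (hM : M.PosSemidef) :
    (M.map fun a => exp a - 1).PosSemidef := by
  refine posSemidef_of_hasSum
    (F := fun n : ℕ => ((n + 1).factorial : ℝ)⁻¹ • M.map (· ^ (n + 1))) (fun x y => ?_)
    fun n => (posSemidef_map_pow hM (n + 1)).smul (by positivity)
  have hexp := (hasSum_nat_add_iff' 1).2 (NormedSpace.expSeries_div_hasSum_exp (𝔸 := ℝ) (M x y))
  simpa [← Real.exp_eq_exp_ℝ, div_eq_inv_mul] using hexp

theorem posSemidef_map_exp (hM : M.PosSemidef) : (M.map exp).PosSemidef := by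
  convert (posSemidef_map_exp_sub_one hM).add (posSemidef_map_pow hM 0) using 1
  ext x y
  simp

end EntrywiseExp

section CondNegDef

variable {X : Type*} {M N : Matrix X X ℝ}

/-- Conditionally negative definite kernels: the symmetric kernels whose quadratic form is
nonpositive on finitely supported weights of total mass zero. -/
structure IsCondNegDef (N : Matrix X X ℝ) : Prop where
  isSymm : N.IsSymm
  kernelForm_nonpos (c : X →₀ ℝ) : c.degree = 0 → kernelForm N c c ≤ 0

theorem degree_eq_linearCombination_one (c : X →₀ ℝ) :
    c.degree = Finsupp.linearCombination ℝ (1 : X → ℝ) c := by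
  simp [Finsupp.degree_apply, Finsupp.linearCombination_apply, Finsupp.sum]

theorem IsCondNegDef.smul (hN : IsCondNegDef N) {u : ℝ} (hu : 0 ≤ u) : IsCondNegDef (u • N) where
  isSymm := hN.isSymm.smul u
  kernelForm_nonpos c hc := by
    simpa using mul_nonpos_of_nonneg_of_nonpos hu (hN.kernelForm_nonpos c hc)

theorem isCondNegDef_const_sub (a : ℝ) (hM : M.PosSemidef) :
    IsCondNegDef (of fun x y => a - M x y) where
  isSymm := IsSymm.ext fun x y => by simp [(posSemidef_iff_kernelForm.1 hM).1.apply x y]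
  kernelForm_nonpos c hc := by
    have hsplit : (of fun x y => a - M x y) = a • vecMulVec 1 1 - M := by
      ext x y
      simp [vecMulVec]
    rw [hsplit, map_sub, map_smul, LinearMap.sub_apply, LinearMap.sub_apply, LinearMap.smul_apply,
      LinearMap.smul_apply, kernelForm_vecMulVec, ← degree_eq_linearCombination_one, hc]
    simpa using (posSemidef_iff_kernelForm.1 hM).2 c

theorem isCondNegDef_integral {Ω : Type*} [MeasurableSpace Ω] {μ : Measure Ω}
    {F : Ω → Matrix X X ℝ} (hF : ∀ x y, Integrable (fun ω => F ω x y) μ)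
    (hneg : ∀ ω, IsCondNegDef (F ω)) : IsCondNegDef (of fun x y => ∫ ω, F ω x y ∂μ) where
  isSymm := IsSymm.ext fun x y => by simp only [of_apply, (hneg _).isSymm.apply]
  kernelForm_nonpos c hc := by
    rw [kernelForm_integral hF]
    exact integral_nonpos fun ω => (hneg ω).kernelForm_nonpos c hc

/-- If `N x y` is the variance of `B x - B y` for a process `B`, then this is twice the covariance
kernel of the increments `B x - B o`. -/
def incrementKernel (N : Matrix X X ℝ) (o : X) : Matrix X X ℝ :=
  of fun x y => N x o + N y o - N x y - N o o

theorem kernelForm_incrementKernel (hN : N.IsSymm) (o : X) (c : X →₀ ℝ) :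
    kernelForm (incrementKernel N o) c c =
      -kernelForm N (c - Finsupp.single o c.degree) (c - Finsupp.single o c.degree) := by
  have hsplit : incrementKernel N o =
      vecMulVec (N.col o) 1 + vecMulVec 1 (N.col o) - N - N o o • vecMulVec 1 1 := by
    ext x y
    simp [incrementKernel, vecMulVec]
  rw [hsplit, kernelForm_sub_single hN]
  simp only [map_add, map_sub, map_smul, LinearMap.add_apply, LinearMap.sub_apply,
    LinearMap.smul_apply, smul_eq_mul, kernelForm_vecMulVec, ← degree_eq_linearCombination_one]
  ring

theorem IsCondNegDef.posSemidef_incrementKernel (hN : IsCondNegDef N) (o : X) :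
    (incrementKernel N o).PosSemidef := by
  refine posSemidef_iff_kernelForm.2 ⟨IsSymm.ext fun x y => ?_, fun c => ?_⟩
  · simp only [incrementKernel, of_apply, hN.isSymm.apply x y]
    ring
  · rw [kernelForm_incrementKernel hN.isSymm]
    exact neg_nonneg.2 (hN.kernelForm_nonpos _ (by simp))

theorem IsCondNegDef.posSemidef_map_exp_neg (hN : IsCondNegDef N) :
    (N.map fun a => exp (-a)).PosSemidef := by
  rcases isEmpty_or_nonempty X with _ | ⟨⟨o⟩⟩
  · rw [Subsingleton.elim (N.map _) 0]
    exact PosSemidef.zero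
  have hfactor : N.map (fun a => exp (-a)) = exp (N o o) •
      (vecMulVec (fun x => exp (-N x o)) (fun x => exp (-N x o)) ⊙
        (incrementKernel N o).map exp) := by
    ext x y
    simp only [map_apply, Matrix.smul_apply, hadamard_apply, vecMulVec_apply, incrementKernel,
      of_apply, smul_eq_mul, ← Real.exp_add]
    ring_nf
  rw [hfactor]
  exact ((posSemidef_vecMulVec_self _).hadamard
    (posSemidef_map_exp (hN.posSemidef_incrementKernel o))).smul (exp_pos _).le

end CondNegDef

section StableMeasure

/-- The measure `u ^ (-1 - p) du` on the positive half-line, up to a constant the Lévy measure of a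
`p`-stable process. Integrating a function of `u * x` against it produces multiples of `x ^ p`. -/
def stableMeasure (p : ℝ) : Measure ℝ :=
  (volume.restrict (Ioi 0)).withDensity fun u => ENNReal.ofReal (u ^ (-1 - p))

variable {p : ℝ} {f : ℝ → ℝ}

theorem ae_pos_stableMeasure : ∀ᵐ u ∂stableMeasure p, 0 < u :=
  (withDensity_absolutelyContinuous _ _).ae_le (ae_restrict_mem measurableSet_Ioi)

theorem integrable_stableMeasure_iff :
    Integrable f (stableMeasure p) ↔ IntegrableOn (fun u => u ^ (-1 - p) * f u) (Ioi 0) := by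
  rw [stableMeasure, integrable_withDensity_iff_integrable_smul' (by fun_prop) (by simp)]
  refine integrableOn_congr_fun (fun u hu => ?_) measurableSet_Ioi
  rw [ENNReal.toReal_ofReal (rpow_nonneg (le_of_lt hu) _), smul_eq_mul]

theorem integral_stableMeasure (f : ℝ → ℝ) :
    ∫ u, f u ∂stableMeasure p = ∫ u in Ioi 0, u ^ (-1 - p) * f u := by
  rw [stableMeasure, integral_withDensity_eq_integral_toReal_smul (by fun_prop) (by simp)]
  refine setIntegral_congr_fun measurableSet_Ioi fun u hu => ?_
  simp only [ENNReal.toReal_ofReal (rpow_nonneg (le_of_lt hu) _), smul_eq_mul]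

theorem integrable_stableMeasure {B C β : ℝ} (hf : Measurable f) (hp : 0 < p) (hpβ : p < β)
    (hB : ∀ u, 0 < u → |f u| ≤ B) (hC : ∀ u, 0 < u → |f u| ≤ C * u ^ β) :
    Integrable f (stableMeasure p) := by
  have hloc : LocallyIntegrableOn f (Ioi 0) := fun u hu =>
    ⟨Ioo 0 (u + 1), mem_nhdsWithin_of_mem_nhds (Ioo_mem_nhds hu (lt_add_one u)),
      Measure.integrableOn_of_bounded (by simp) hf.aestronglyMeasurable <|
        (ae_restrict_mem measurableSet_Ioo).mono fun v hv => hB v hv.1⟩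
  have htop : f =O[atTop] fun u : ℝ => u ^ (-0 : ℝ) :=
    .of_bound B <| (eventually_gt_atTop 0).mono fun u hu => by simpa using hB u hu
  have hzero : f =O[𝓝[>] 0] fun u : ℝ => u ^ (-(-β)) :=
    .of_bound C <| eventually_mem_nhdsWithin.mono fun u hu => by
      simpa [abs_rpow_of_nonneg (le_of_lt hu), abs_of_pos (show 0 < u from hu)] using hC u hu
  have hmellin := mellin_convergent_of_isBigO_scalar hloc htop (neg_lt_zero.2 hp) hzero
    (neg_lt_neg hpβ)
  rwa [integrable_stableMeasure_iff, show -1 - p = -p - 1 by ring]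

theorem rpow_eq_rpow_neg_mul_mul_rpow {u x : ℝ} (hu : 0 < u) (hx : 0 < x) (q : ℝ) :
    u ^ q = x ^ (-q) * (u * x) ^ q := by
  rw [mul_rpow hu.le hx.le, mul_left_comm, ← rpow_add hx]
  simp

theorem integrable_comp_mul_right_stableMeasure (hf : Integrable f (stableMeasure p))
    (hf0 : f 0 = 0) {x : ℝ} (hx : 0 ≤ x) :
    Integrable (fun u => f (u * x)) (stableMeasure p) := by
  rcases hx.eq_or_lt with rfl | hx
  · simp [hf0]
  rw [integrable_stableMeasure_iff] at hf ⊢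
  rw [← zero_mul x, ← integrableOn_Ioi_comp_mul_right_iff _ _ hx] at hf
  refine IntegrableOn.congr_fun (hf.const_mul (x ^ (-(-1 - p)))) (fun u hu => ?_) measurableSet_Ioi
  simp only [rpow_eq_rpow_neg_mul_mul_rpow hu hx, mul_assoc]

theorem integral_comp_mul_right_stableMeasure (hp : 0 < p) (hf0 : f 0 = 0) {x : ℝ} (hx : 0 ≤ x) :
    ∫ u, f (u * x) ∂stableMeasure p = x ^ p * ∫ u, f u ∂stableMeasure p := by
  rcases hx.eq_or_lt with rfl | hx
  · simp [hf0, zero_rpow hp.ne']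
  have hscale : ∫ u in Ioi 0, u ^ (-1 - p) * f (u * x) =
      x ^ (-(-1 - p)) * ∫ u in Ioi 0, (u * x) ^ (-1 - p) * f (u * x) := by
    rw [← integral_const_mul]
    refine setIntegral_congr_fun measurableSet_Ioi fun u hu => ?_
    simp only [rpow_eq_rpow_neg_mul_mul_rpow hu hx, mul_assoc]
  simp only [integral_stableMeasure]
  rw [hscale, integral_comp_mul_right_Ioi (fun u => u ^ (-1 - p) * f u) 0 hx, zero_mul,
    show -(-1 - p) = 1 + p by ring, rpow_add hx, rpow_one, smul_eq_mul]
  field_simp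

theorem integral_stableMeasure_pos (hf : Integrable f (stableMeasure p)) (h0 : ∀ u, 0 < u → 0 ≤ f u)
    (hpos : ∀ u, 1 < u → 0 < f u) : 0 < ∫ u, f u ∂stableMeasure p := by
  rw [integral_stableMeasure]
  rw [integrable_stableMeasure_iff] at hf
  refine (setIntegral_pos_iff_support_of_nonneg_ae ?_ hf).2 ?_
  · filter_upwards [ae_restrict_mem measurableSet_Ioi] with u hu
    exact mul_nonneg (rpow_nonneg (le_of_lt hu) _) (h0 u hu)
  · refine lt_of_lt_of_le ?_ (measure_mono (s := Ioi (1 : ℝ)) fun u hu => ?_)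
    · simp
    · have hu0 : 0 < u := one_pos.trans hu
      exact ⟨(mul_pos (rpow_pos_of_pos hu0 _) (hpos u hu)).ne', hu0⟩

end StableMeasure

section LocalNondeterminism

variable {X : Type*} {M N Ψ : Matrix X X ℝ} {c : X →₀ ℝ} {o t : X}

theorem kernelForm_sub_vecMulVec_col (hM : M.IsSymm) (ho : M o o = 1) (c : X →₀ ℝ) :
    kernelForm (M - vecMulVec (M.col o) (M.col o)) c c =
      kernelForm M (c - Finsupp.single o (Finsupp.linearCombination ℝ (M.col o) c))
        (c - Finsupp.single o (Finsupp.linearCombination ℝ (M.col o) c)) := by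
  rw [kernelForm_sub_single hM, ho, map_sub, LinearMap.sub_apply, LinearMap.sub_apply,
    kernelForm_vecMulVec]
  ring

theorem sub_single_mul_eq_zero (hto : t ≠ o) (hΨo : Ψ t o = 0)
    (hc : ∀ s ≠ t, c s * Ψ t s = 0) (z : ℝ) :
    ∀ s ≠ t, (c - Finsupp.single o z) s * Ψ t s = 0 := by
  intro s hs
  rcases eq_or_ne s o with rfl | hso
  · rw [hΨo, mul_zero]
  · simpa [Finsupp.single_apply, hso.symm] using hc s hs

theorem isSymm_of_posSemidef_of_isCondNegDef_add (hΨ : Ψ.PosSemidef)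
    (hN : IsCondNegDef (N + Ψ)) : N.IsSymm := by
  simpa using hN.isSymm.sub (posSemidef_iff_kernelForm.1 hΨ).1

theorem one_sub_exp_mul_sq_le_kernelForm (hΨ : Ψ.PosSemidef) (hN : IsCondNegDef (N + Ψ))
    (ht : N t t = 0) (hc : ∀ s ≠ t, c s * Ψ t s = 0) :
    (1 - exp (-Ψ t t)) * c t ^ 2 ≤ kernelForm (N.map fun a => exp (-a)) c c := by
  set G := (N + Ψ).map fun a => exp (-a) with hG
  have hGpos : G.PosSemidef := hN.posSemidef_map_exp_neg
  have hsplit : N.map (fun a => exp (-a)) = G + G ⊙ Ψ.map fun a => exp a - 1 := by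
    ext x y
    simp [hG, mul_sub, ← Real.exp_add]
  have hlocal := apply_self_mul_sq_le_kernelForm (hGpos.hadamard (posSemidef_map_exp_sub_one hΨ))
    (c := c) (t := t) fun s hs => by
      rcases mul_eq_zero.1 (hc s hs) with h | h <;> simp [h]
  have htt : (G ⊙ Ψ.map fun a => exp a - 1) t t = 1 - exp (-Ψ t t) := by
    simp [hG, ht, mul_sub, ← Real.exp_add]
  rw [hsplit, map_add, LinearMap.add_apply, LinearMap.add_apply, ← htt]
  linarith [(posSemidef_iff_kernelForm.1 hGpos).2 c]

/-- The covariance kernel, given its value at `o`, of a process with covariance `exp (-N x y)`. It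
is chosen so that its mixtures over the multiples of `N` are bifractional kernels. -/
def conditionedExpKernel (N : Matrix X X ℝ) (o : X) : Matrix X X ℝ :=
  of fun x y => exp (-N x y) - exp (-(N x o + N y o))

theorem conditionedExpKernel_eq_sub_vecMulVec (N : Matrix X X ℝ) (o : X) :
    conditionedExpKernel N o = N.map (fun a => exp (-a)) -
      vecMulVec ((N.map fun a => exp (-a)).col o) ((N.map fun a => exp (-a)).col o) := by
  ext x y
  simp [conditionedExpKernel, vecMulVec, ← Real.exp_add, add_comm]

theorem one_sub_exp_mul_sq_le_kernelForm_conditionedExpKernel (hΨ : Ψ.PosSemidef)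
    (hN : IsCondNegDef (N + Ψ)) (ho : N o o = 0) (ht : N t t = 0) (hto : t ≠ o) (hΨo : Ψ t o = 0)
    (hc : ∀ s ≠ t, c s * Ψ t s = 0) :
    (1 - exp (-Ψ t t)) * c t ^ 2 ≤ kernelForm (conditionedExpKernel N o) c c := by
  have hsymm : (N.map fun a => exp (-a)).IsSymm :=
    (isSymm_of_posSemidef_of_isCondNegDef_add hΨ hN).map _
  have hlocal := one_sub_exp_mul_sq_le_kernelForm hΨ hN ht (sub_single_mul_eq_zero hto hΨo hc
    (Finsupp.linearCombination ℝ ((N.map fun a => exp (-a)).col o) c))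
  rw [conditionedExpKernel_eq_sub_vecMulVec, kernelForm_sub_vecMulVec_col hsymm (by simp [ho])]
  rwa [Finsupp.sub_apply, Finsupp.single_eq_of_ne hto, sub_zero] at hlocal

theorem apply_self_mul_sq_le_kernelForm_incrementKernel (hΨ : Ψ.PosSemidef)
    (hN : IsCondNegDef (N + Ψ)) (hto : t ≠ o) (hΨo : Ψ t o = 0) (hc : ∀ s ≠ t, c s * Ψ t s = 0) :
    Ψ t t * c t ^ 2 ≤ kernelForm (incrementKernel N o) c c := by
  have hlocal := apply_self_mul_sq_le_kernelForm hΨ (sub_single_mul_eq_zero hto hΨo hc c.degree)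
  have hneg := hN.kernelForm_nonpos (c - Finsupp.single o c.degree) (by simp)
  rw [map_add, LinearMap.add_apply, LinearMap.add_apply] at hneg
  rw [kernelForm_incrementKernel (isSymm_of_posSemidef_of_isCondNegDef_add hΨ hN)]
  rw [Finsupp.sub_apply, Finsupp.single_eq_of_ne hto, sub_zero] at hlocal
  linarith

/-- The covariance kernel, up to a positive factor, of the bifractional process with exponent `K`
built on a process `B` started at `o`, where `N x y` is the variance of `B x - B y`. -/
def bifractionalKernel (N : Matrix X X ℝ) (o : X) (K : ℝ) : Matrix X X ℝ :=
  of fun x y => (N x o + N y o) ^ K - N x y ^ K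

theorem isSymm_bifractionalKernel (hN : N.IsSymm) (o : X) (K : ℝ) :
    (bifractionalKernel N o K).IsSymm :=
  IsSymm.ext fun x y => by simp only [bifractionalKernel, of_apply, add_comm, hN.apply x y]

theorem bifractionalKernel_one (hN : N o o = 0) :
    bifractionalKernel N o 1 = incrementKernel N o := by
  ext x y
  simp [bifractionalKernel, incrementKernel, hN]

theorem integrable_one_sub_exp_neg {p : ℝ} (hp : 0 < p) (hp1 : p < 1) :
    Integrable (fun u => 1 - exp (-u)) (stableMeasure p) := by
  have habs (u : ℝ) (hu : 0 < u) : |1 - exp (-u)| = 1 - exp (-u) :=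
    abs_of_nonneg (by simpa using hu.le)
  refine integrable_stableMeasure (B := 1) (C := 1) (by fun_prop) hp hp1 (fun u hu => ?_)
    fun u hu => ?_
  · linarith [habs u hu, exp_pos (-u)]
  · rw [habs u hu, rpow_one]
    linarith [add_one_le_exp (-u)]

theorem integral_one_sub_exp_neg_mul {p x : ℝ} (hp : 0 < p) (hx : 0 ≤ x) :
    ∫ u, (1 - exp (-(u * x))) ∂stableMeasure p =
      x ^ p * ∫ u, (1 - exp (-u)) ∂stableMeasure p :=
  integral_comp_mul_right_stableMeasure (f := fun u => 1 - exp (-u)) hp (by simp) hx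

theorem integrable_one_sub_exp_neg_mul {p x : ℝ} (hp : 0 < p) (hp1 : p < 1) (hx : 0 ≤ x) :
    Integrable (fun u => 1 - exp (-(u * x))) (stableMeasure p) :=
  integrable_comp_mul_right_stableMeasure (integrable_one_sub_exp_neg hp hp1) (by simp) hx

theorem integral_one_sub_exp_neg_pos {p : ℝ} (hp : 0 < p) (hp1 : p < 1) :
    0 < ∫ u, (1 - exp (-u)) ∂stableMeasure p :=
  integral_stableMeasure_pos (integrable_one_sub_exp_neg hp hp1)
    (fun u hu => by simpa using hu.le) fun u hu => by simpa using one_pos.trans hu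

theorem integrable_conditionedExpKernel_smul {K : ℝ} (hK : 0 < K) (hK1 : K < 1)
    (hN : ∀ x y, 0 ≤ N x y) (o x y : X) :
    Integrable (fun u : ℝ => conditionedExpKernel (u • N) o x y) (stableMeasure K) := by
  have hdiff := (integrable_one_sub_exp_neg_mul hK hK1 (add_nonneg (hN x o) (hN y o))).sub
    (integrable_one_sub_exp_neg_mul hK hK1 (hN x y))
  refine hdiff.congr (Eventually.of_forall fun u => ?_)
  simp [conditionedExpKernel, mul_add]

theorem integral_conditionedExpKernel_smul {K : ℝ} (hK : 0 < K) (hK1 : K < 1)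
    (hN : ∀ x y, 0 ≤ N x y) (o x y : X) :
    ∫ u : ℝ, conditionedExpKernel (u • N) o x y ∂stableMeasure K =
      bifractionalKernel N o K x y * ∫ u, (1 - exp (-u)) ∂stableMeasure K := by
  have hdiff (u : ℝ) : conditionedExpKernel (u • N) o x y =
      (1 - exp (-(u * (N x o + N y o)))) - (1 - exp (-(u * N x y))) := by
    simp [conditionedExpKernel, mul_add]
  have hNo : 0 ≤ N x o + N y o := add_nonneg (hN x o) (hN y o)
  simp only [hdiff]
  rw [integral_sub (integrable_one_sub_exp_neg_mul hK hK1 hNo)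
    (integrable_one_sub_exp_neg_mul hK hK1 (hN x y)), integral_one_sub_exp_neg_mul hK hNo,
    integral_one_sub_exp_neg_mul hK (hN x y), bifractionalKernel, of_apply]
  ring

theorem kernelForm_bifractionalKernel_mul_integral {K : ℝ} (hK : 0 < K) (hK1 : K < 1)
    (hN : ∀ x y, 0 ≤ N x y) (o : X) (c : X →₀ ℝ) :
    kernelForm (bifractionalKernel N o K) c c * ∫ u, (1 - exp (-u)) ∂stableMeasure K =
      ∫ u, kernelForm (conditionedExpKernel (u • N) o) c c ∂stableMeasure K := by
  have hkernel : (of fun x y => ∫ u : ℝ, conditionedExpKernel (u • N) o x y ∂stableMeasure K) =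
      (∫ u, (1 - exp (-u)) ∂stableMeasure K) • bifractionalKernel N o K := by
    ext x y
    rw [of_apply, integral_conditionedExpKernel_smul hK hK1 hN, mul_comm]
    rfl
  rw [← kernelForm_integral (integrable_conditionedExpKernel_smul hK hK1 hN o), hkernel, map_smul,
    LinearMap.smul_apply, LinearMap.smul_apply, smul_eq_mul, mul_comm]

theorem rpow_apply_self_mul_sq_le_kernelForm_of_lt_one {K : ℝ} (hK : 0 < K) (hK1 : K < 1)
    (hΨ : Ψ.PosSemidef) (hN : IsCondNegDef (N + Ψ)) (hN0 : ∀ x y, 0 ≤ N x y) (ho : N o o = 0)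
    (ht : N t t = 0) (hto : t ≠ o) (hΨo : Ψ t o = 0) (hc : ∀ s ≠ t, c s * Ψ t s = 0) :
    Ψ t t ^ K * c t ^ 2 ≤ kernelForm (bifractionalKernel N o K) c c := by
  have hscaled (u : ℝ) (hu : 0 < u) : (1 - exp (-(u * Ψ t t))) * c t ^ 2 ≤
      kernelForm (conditionedExpKernel (u • N) o) c c := by
    refine one_sub_exp_mul_sq_le_kernelForm_conditionedExpKernel (Ψ := u • Ψ) (hΨ.smul hu.le)
      (smul_add u N Ψ ▸ hN.smul hu.le) ?_ ?_ hto ?_ fun s hs => ?_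
    · simp [ho]
    · simp [ht]
    · simp [hΨo]
    · simpa [hu.ne'] using hc s hs
  refine le_of_mul_le_mul_right ?_ (integral_one_sub_exp_neg_pos hK hK1)
  calc Ψ t t ^ K * c t ^ 2 * ∫ u, (1 - exp (-u)) ∂stableMeasure K
      = ∫ u, (1 - exp (-(u * Ψ t t))) * c t ^ 2 ∂stableMeasure K := by
        rw [integral_mul_const, integral_one_sub_exp_neg_mul hK hΨ.diag_nonneg]
        ring
    _ ≤ ∫ u, kernelForm (conditionedExpKernel (u • N) o) c c ∂stableMeasure K :=
        integral_mono_ae ((integrable_one_sub_exp_neg_mul hK hK1 hΨ.diag_nonneg).mul_const _)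
          (integrable_kernelForm (integrable_conditionedExpKernel_smul hK hK1 hN0 o) c c)
          (ae_pos_stableMeasure.mono hscaled)
    _ = _ := (kernelForm_bifractionalKernel_mul_integral hK hK1 hN0 o c).symm

theorem rpow_apply_self_mul_sq_le_kernelForm {K : ℝ} (hK : 0 < K) (hK1 : K ≤ 1)
    (hΨ : Ψ.PosSemidef) (hN : IsCondNegDef (N + Ψ)) (hN0 : ∀ x y, 0 ≤ N x y) (ho : N o o = 0)
    (ht : N t t = 0) (hto : t ≠ o) (hΨo : Ψ t o = 0) (hc : ∀ s ≠ t, c s * Ψ t s = 0) :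
    Ψ t t ^ K * c t ^ 2 ≤ kernelForm (bifractionalKernel N o K) c c := by
  rcases hK1.eq_or_lt with rfl | hK1
  · rw [rpow_one, bifractionalKernel_one ho]
    exact apply_self_mul_sq_le_kernelForm_incrementKernel hΨ hN hto hΨo hc
  · exact rpow_apply_self_mul_sq_le_kernelForm_of_lt_one hK hK1 hΨ hN hN0 ho ht hto hΨo hc

end LocalNondeterminism

section Autocorrelation

/-- The autocorrelation `x ↦ ∫ f (y + x) f y dy` of a real function, which is positive definite
and vanishes as soon as the translate of `f` by `x` is disjoint from `f`. -/
def autocorrelation (f : ℝ → ℝ) (x : ℝ) : ℝ := ∫ y, f (y + x) * f y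

variable {f : ℝ → ℝ}

theorem integral_shift_mul_shift (f : ℝ → ℝ) (a b : ℝ) :
    ∫ y, f (y + a) * f (y + b) = autocorrelation f (a - b) := by
  rw [autocorrelation, ← integral_add_right_eq_self (fun y => f (y + (a - b)) * f y) b]
  simp only [add_assoc, add_sub_cancel]

theorem integrable_shift_mul_shift (hf : Continuous f) (hsupp : HasCompactSupport f) (a b : ℝ) :
    Integrable fun y => f (y + a) * f (y + b) :=
  Continuous.integrable_of_hasCompactSupport (by fun_prop)
    (hsupp.comp_homeomorph (Homeomorph.addRight a)).mul_right

theorem posSemidef_circulant_autocorrelation (hf : Continuous f) (hsupp : HasCompactSupport f) :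
    (circulant (autocorrelation f)).PosSemidef := by
  have hmix := posSemidef_integral (F := fun y => vecMulVec (fun a => f (y + a)) fun b => f (y + b))
    (integrable_shift_mul_shift hf hsupp) fun y => posSemidef_vecMulVec_self _
  simp only [vecMulVec_apply, integral_shift_mul_shift] at hmix
  exact hmix

theorem measurable_autocorrelation (hf : Continuous f) : Measurable (autocorrelation f) := by
  have hcont : Continuous fun q : ℝ × ℝ => f (q.2 + q.1) * f q.2 := by fun_prop
  exact (hcont.stronglyMeasurable.integral_prod_right' (ν := volume)).measurable

theorem autocorrelation_nonneg (hf : ∀ y, 0 ≤ f y) (x : ℝ) : 0 ≤ autocorrelation f x :=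
  integral_nonneg fun _ => mul_nonneg (hf _) (hf _)

theorem autocorrelation_eq_zero {ρ x : ℝ} (hf : Function.support f ⊆ Metric.ball 0 ρ)
    (hx : 2 * ρ ≤ |x|) : autocorrelation f x = 0 := by
  refine integral_eq_zero_of_ae (Eventually.of_forall fun y => ?_)
  by_contra hne
  have hleft := hf (left_ne_zero_of_mul hne)
  have hright := hf (right_ne_zero_of_mul hne)
  rw [mem_ball_zero_iff, Real.norm_eq_abs] at hleft hright
  have htri := abs_sub (y + x) y
  rw [add_sub_cancel_left] at htri
  linarith

theorem autocorrelation_zero_sub (hf : Continuous f) (hsupp : HasCompactSupport f) (x : ℝ) :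
    autocorrelation f 0 - autocorrelation f x = 1 / 2 * ∫ y, (f (y + x) - f y) ^ 2 := by
  have hint := integrable_shift_mul_shift hf hsupp
  have hsq : ∫ y, (f (y + x) - f y) ^ 2 =
      ∫ y, (f (y + x) * f (y + x) + f (y + 0) * f (y + 0) - 2 * (f (y + x) * f (y + 0))) := by
    refine integral_congr_ae (Eventually.of_forall fun y => ?_)
    simp only [add_zero]
    ring
  have hsum : Integrable fun y => f (y + x) * f (y + x) + f (y + 0) * f (y + 0) :=
    (hint x x).add (hint 0 0)
  rw [hsq, integral_sub hsum ((hint x 0).const_mul 2), integral_add (hint x x) (hint 0 0),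
    integral_const_mul]
  simp only [integral_shift_mul_shift, sub_self, sub_zero]
  ring

theorem autocorrelation_le_zero (hf : Continuous f) (hsupp : HasCompactSupport f) (x : ℝ) :
    autocorrelation f x ≤ autocorrelation f 0 := by
  rw [← sub_nonneg, autocorrelation_zero_sub hf hsupp]
  positivity

theorem sq_shift_sub_le_of_lipschitzWith {L : NNReal} (hf : LipschitzWith L f) (x y : ℝ) :
    (f (y + x) - f y) ^ 2 ≤ (L * x) ^ 2 *
      ((tsupport f).indicator 1 (y + x) + (tsupport f).indicator 1 y) := by
  have hlip : (f (y + x) - f y) ^ 2 ≤ (L * x) ^ 2 := by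
    have := hf.dist_le_mul (y + x) y
    rw [Real.dist_eq, Real.dist_eq, add_sub_cancel_left] at this
    rw [← sq_abs, mul_pow, ← sq_abs x, ← mul_pow]
    gcongr
  by_cases hy : y ∈ tsupport f <;> by_cases hyx : y + x ∈ tsupport f <;>
    simp only [indicator_of_mem, indicator_of_notMem, image_eq_zero_of_notMem_tsupport, hy, hyx,
      not_false_eq_true, Pi.one_apply] at hlip ⊢ <;>
    nlinarith [sq_nonneg (L * x)]

theorem autocorrelation_zero_sub_le {L : NNReal} (hf : LipschitzWith L f)
    (hsupp : HasCompactSupport f) (x : ℝ) :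
    autocorrelation f 0 - autocorrelation f x ≤ L ^ 2 * volume.real (tsupport f) * x ^ 2 := by
  have hind : Integrable ((tsupport f).indicator (1 : ℝ → ℝ)) :=
    (integrable_indicator_iff hsupp.measurableSet).2
      (integrableOn_const hsupp.isCompact.measure_lt_top.ne)
  have hbound : ∫ y, (f (y + x) - f y) ^ 2 ≤ ∫ y, (L * x) ^ 2 *
      ((tsupport f).indicator 1 (y + x) + (tsupport f).indicator 1 y) :=
    integral_mono_of_nonneg (Eventually.of_forall fun y => sq_nonneg _)
      (((hind.comp_add_right x).add hind).const_mul _)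
      (Eventually.of_forall (sq_shift_sub_le_of_lipschitzWith hf x))
  rw [integral_const_mul, integral_add (hind.comp_add_right x) hind,
    integral_add_right_eq_self (fun y => (tsupport f).indicator (1 : ℝ → ℝ) y),
    integral_indicator_one hsupp.measurableSet] at hbound
  rw [autocorrelation_zero_sub hf.continuous hsupp]
  linarith

end Autocorrelation

section PosDefBump

/-- Positive definite bump functions: the profiles which, mixed over scales, produce both the
fractional power `|x| ^ α` and a positive definite kernel localized near the diagonal. -/
structure IsPosDefBump (χ : ℝ → ℝ) : Prop where
  measurable : Measurable χ
  posSemidef : (circulant χ).PosSemidef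
  map_zero : χ 0 = 1
  nonneg (x : ℝ) : 0 ≤ χ x
  le_one (x : ℝ) : χ x ≤ 1
  eq_zero_of_one_le_abs (x : ℝ) : 1 ≤ |x| → χ x = 0
  exists_one_sub_le_sq : ∃ C, ∀ x, 1 - χ x ≤ C * x ^ 2

theorem IsPosDefBump.map_mul_abs {χ : ℝ → ℝ} (hχ : IsPosDefBump χ) (u x : ℝ) :
    χ (u * |x|) = χ (u * x) := by
  have heven (y : ℝ) : χ (-y) = χ y := by
    simpa using (posSemidef_iff_kernelForm.1 hχ.posSemidef).1.apply y 0
  rcases abs_choice x with h | h <;> simp only [h, mul_neg, heven]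

theorem isPosDefBump_autocorrelation_div {f : ℝ → ℝ} {L : NNReal} (hf : LipschitzWith L f)
    (hsupp : HasCompactSupport f) (hnonneg : ∀ y, 0 ≤ f y)
    (hball : Function.support f ⊆ Metric.ball 0 (1 / 2)) (hpos : 0 < autocorrelation f 0) :
    IsPosDefBump fun x => autocorrelation f x / autocorrelation f 0 where
  measurable := (measurable_autocorrelation hf.continuous).div_const _
  posSemidef := by
    convert (posSemidef_circulant_autocorrelation hf.continuous hsupp).smul
      (inv_nonneg.2 hpos.le) using 1
    ext x y
    simp [div_eq_inv_mul]
  map_zero := div_self hpos.ne'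
  nonneg x := div_nonneg (autocorrelation_nonneg hnonneg x) hpos.le
  le_one x := (div_le_one hpos).2 (autocorrelation_le_zero hf.continuous hsupp x)
  eq_zero_of_one_le_abs x hx := by
    rw [autocorrelation_eq_zero hball (by linarith), zero_div]
  exists_one_sub_le_sq := by
    refine ⟨L ^ 2 * volume.real (tsupport f) / autocorrelation f 0, fun x => ?_⟩
    rw [one_sub_div hpos.ne', div_mul_eq_mul_div]
    gcongr
    exact autocorrelation_zero_sub_le hf hsupp x

theorem exists_isPosDefBump : ∃ χ, IsPosDefBump χ := by
  let f : ContDiffBump (0 : ℝ) := ⟨1 / 4, 1 / 2, by norm_num, by norm_num⟩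
  obtain ⟨L, hL⟩ := (f.contDiff (n := 1)).lipschitzWith_of_hasCompactSupport f.hasCompactSupport
    one_ne_zero
  refine ⟨_, isPosDefBump_autocorrelation_div hL f.hasCompactSupport (fun _ => f.nonneg)
    f.support_eq.subset ?_⟩
  refine Continuous.integral_pos_of_hasCompactSupport_nonneg_nonzero (x := 0)
    (by have := f.continuous; fun_prop) f.hasCompactSupport.mul_left
    (fun _ => mul_nonneg f.nonneg f.nonneg) ?_
  simp [f.one_of_mem_closedBall (Metric.mem_closedBall_self f.rIn_pos.le)]

end PosDefBump

section Localization

/-- The mixture of the bumps `χ (u * x)` over the scales `u` with `1 ≤ u * r`, weighted by the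
`α`-stable measure. It inherits positive definiteness and vanishes at distance `r` from zero. -/
def localizedProfile (χ : ℝ → ℝ) (α r x : ℝ) : ℝ :=
  ∫ u, (Ici 1).indicator 1 (u * r) * χ (u * x) ∂stableMeasure α

variable {χ : ℝ → ℝ} {α r x : ℝ}

theorem integrable_one_sub_posDefBump (hχ : IsPosDefBump χ) (hα : 0 < α) (hα2 : α < 2) :
    Integrable (fun u => 1 - χ u) (stableMeasure α) := by
  obtain ⟨C, hC⟩ := hχ.exists_one_sub_le_sq
  have habs (u : ℝ) : |1 - χ u| = 1 - χ u := abs_of_nonneg (sub_nonneg.2 (hχ.le_one u))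
  refine integrable_stableMeasure (B := 1) (C := C) (hχ.measurable.const_sub 1) hα hα2
    (fun u _ => ?_) fun u _ => ?_
  · linarith [habs u, hχ.nonneg u]
  · rw [habs u, rpow_two]
    exact hC u

theorem integrable_one_sub_posDefBump_mul (hχ : IsPosDefBump χ) (hα : 0 < α) (hα2 : α < 2)
    (x : ℝ) : Integrable (fun u => 1 - χ (u * x)) (stableMeasure α) := by
  simp only [← hχ.map_mul_abs _ x]
  exact integrable_comp_mul_right_stableMeasure (integrable_one_sub_posDefBump hχ hα hα2)
    (by simp [hχ.map_zero]) (abs_nonneg x)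

theorem integral_one_sub_posDefBump_mul (hχ : IsPosDefBump χ) (hα : 0 < α) (x : ℝ) :
    ∫ u, (1 - χ (u * x)) ∂stableMeasure α = |x| ^ α * ∫ u, (1 - χ u) ∂stableMeasure α := by
  simp only [← hχ.map_mul_abs _ x]
  exact integral_comp_mul_right_stableMeasure (f := fun u => 1 - χ u) hα (by simp [hχ.map_zero])
    (abs_nonneg x)

theorem integral_one_sub_posDefBump_pos (hχ : IsPosDefBump χ) (hα : 0 < α) (hα2 : α < 2) :
    0 < ∫ u, (1 - χ u) ∂stableMeasure α := by
  refine integral_stableMeasure_pos (integrable_one_sub_posDefBump hχ hα hα2)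
    (fun u _ => sub_nonneg.2 (hχ.le_one u)) fun u hu => ?_
  rw [hχ.eq_zero_of_one_le_abs u (hu.le.trans (le_abs_self u)), sub_zero]
  exact one_pos

theorem integrable_indicator_Ici_one (hα : 0 < α) :
    Integrable ((Ici 1).indicator (1 : ℝ → ℝ)) (stableMeasure α) := by
  refine integrable_stableMeasure (B := 1) (C := 1) (measurable_one.indicator measurableSet_Ici) hα
    (lt_add_one α) (fun u _ => ?_) fun u hu => ?_
  · rcases indicator_eq_zero_or_self (Ici 1) (1 : ℝ → ℝ) u with h | h <;> simp [h]
  · by_cases h : 1 ≤ u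
    · simpa [h] using one_le_rpow h (by linarith)
    · simpa [h] using rpow_nonneg hu.le _

theorem integrable_indicator_mul_posDefBump (hχ : IsPosDefBump χ) (hα : 0 < α) (hr : 0 ≤ r)
    (x : ℝ) :
    Integrable (fun u => (Ici 1).indicator 1 (u * r) * χ (u * x)) (stableMeasure α) := by
  have hind := integrable_comp_mul_right_stableMeasure (integrable_indicator_Ici_one hα)
    (by simp) hr
  refine hind.mul_bdd (c := 1) ?_ (Eventually.of_forall fun u => ?_)
  · exact (hχ.measurable.comp (measurable_mul_const x)).aestronglyMeasurable
  · rw [Real.norm_of_nonneg (hχ.nonneg _)]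
    exact hχ.le_one _

theorem localizedProfile_zero (hχ : IsPosDefBump χ) (hα : 0 < α) (hr : 0 ≤ r) :
    localizedProfile χ α r 0 = r ^ α * ∫ u, (Ici 1).indicator 1 u ∂stableMeasure α := by
  simp only [localizedProfile, mul_zero, hχ.map_zero, mul_one]
  exact integral_comp_mul_right_stableMeasure hα (by simp) hr

theorem localizedProfile_eq_zero (hχ : IsPosDefBump χ) (hx : r ≤ |x|) :
    localizedProfile χ α r x = 0 := by
  refine integral_eq_zero_of_ae (ae_pos_stableMeasure.mono fun u hu => ?_)
  by_cases hur : 1 ≤ u * r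
  · have hux : 1 ≤ |u * x| := by
      rw [abs_mul, abs_of_pos hu]
      exact hur.trans (by gcongr)
    simp [hχ.eq_zero_of_one_le_abs _ hux]
  · simp [hur]

theorem posSemidef_circulant_mul_left (hχ : (circulant χ).PosSemidef) (u : ℝ) :
    (circulant fun x => χ (u * x)).PosSemidef := by
  convert hχ.submatrix (u * ·) using 1
  ext x y
  simp [mul_sub]

theorem posSemidef_localizedProfile (hχ : IsPosDefBump χ) (hα : 0 < α) (hr : 0 ≤ r) :
    (circulant (localizedProfile χ α r)).PosSemidef :=
  posSemidef_integral
    (F := fun u => (Ici 1).indicator (1 : ℝ → ℝ) (u * r) • circulant fun x => χ (u * x))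
    (fun x y => integrable_indicator_mul_posDefBump hχ hα hr (x - y))
    fun u => (posSemidef_circulant_mul_left hχ.posSemidef u).smul
      (indicator_nonneg (fun _ _ => zero_le_one) _)

theorem isCondNegDef_add_localizedProfile (hχ : IsPosDefBump χ) (hα : 0 < α) (hα2 : α < 2)
    (hr : 0 ≤ r) :
    IsCondNegDef (circulant fun x =>
      |x| ^ α * (∫ u, (1 - χ u) ∂stableMeasure α) + localizedProfile χ α r x) := by
  let θ : ℝ → ℝ := (Ici 1).indicator 1
  have hint (x : ℝ) := (integrable_one_sub_posDefBump_mul hχ hα hα2 x).add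
    (integrable_indicator_mul_posDefBump hχ hα hr x)
  have hentry (u x : ℝ) :
      (1 - χ (u * x)) + θ (u * r) * χ (u * x) = 1 - (1 - θ (u * r)) * χ (u * x) := by ring
  have hmix := isCondNegDef_integral (μ := stableMeasure α)
    (F := fun u => of fun x y =>
      1 - ((1 - θ (u * r)) • circulant fun x => χ (u * x)) x y)
    (fun x y => (hint (x - y)).congr (Eventually.of_forall fun u => hentry u (x - y)))
    fun u => isCondNegDef_const_sub 1 ((posSemidef_circulant_mul_left hχ.posSemidef u).smul
      (sub_nonneg.2 (indicator_le_self' (fun _ _ => zero_le_one) _)))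
  convert hmix using 1
  ext x y
  simp only [circulant_apply, of_apply, Matrix.smul_apply, smul_eq_mul, ← hentry]
  rw [integral_add (integrable_one_sub_posDefBump_mul hχ hα hα2 _)
    (integrable_indicator_mul_posDefBump hχ hα hr _), integral_one_sub_posDefBump_mul hχ hα]
  rfl

theorem exists_localization_abs_rpow (hα : 0 < α) (hα2 : α < 2) :
    ∃ d > 0, ∀ r, 0 ≤ r → ∃ ψ : ℝ → ℝ, (circulant ψ).PosSemidef ∧ ψ 0 = d * r ^ α ∧
      (∀ x, r ≤ |x| → ψ x = 0) ∧ IsCondNegDef (circulant (|·| ^ α) + circulant ψ) := by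
  obtain ⟨χ, hχ⟩ := exists_isPosDefBump
  set I := ∫ u, (1 - χ u) ∂stableMeasure α with hI
  have hIpos : 0 < I := integral_one_sub_posDefBump_pos hχ hα hα2
  refine ⟨I⁻¹ * ∫ u, (Ici 1).indicator 1 u ∂stableMeasure α, mul_pos (inv_pos.2 hIpos) ?_,
    fun r hr => ⟨I⁻¹ • localizedProfile χ α r, ?_, ?_, fun x hx => ?_, ?_⟩⟩
  · refine integral_stableMeasure_pos (integrable_indicator_Ici_one hα)
      (fun u _ => indicator_nonneg (fun _ _ => zero_le_one) u) fun u hu => ?_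
    simp [hu.le]
  · rw [circulant_smul]
    exact (posSemidef_localizedProfile hχ hα hr).smul (inv_nonneg.2 hIpos.le)
  · rw [Pi.smul_apply, localizedProfile_zero hχ hα hr, smul_eq_mul]
    ring
  · rw [Pi.smul_apply, localizedProfile_eq_zero hχ hx, smul_zero]
  · convert (isCondNegDef_add_localizedProfile hχ hα hα2 hr).smul (inv_nonneg.2 hIpos.le) using 1
    rw [← circulant_smul, ← circulant_add, ← hI]
    congr 1
    ext x
    simp [mul_add, mul_comm _ I, hIpos.ne']

end Localization

section PredictionError

variable {X ι : Type*} [Fintype ι]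

/-- The weights of the error made when predicting the value at `t` of a process by the linear
combination with coefficients `a` of its values at the points `s j`. -/
def predictionErrorWeights (t : X) (s : ι → X) (a : ι → ℝ) : X →₀ ℝ :=
  Finsupp.single t 1 - ∑ j, Finsupp.single (s j) (a j)

theorem predictionErrorWeights_apply_self {t : X} {s : ι → X} (hs : ∀ j, s j ≠ t) (a : ι → ℝ) :
    predictionErrorWeights t s a t = 1 := by
  simp [predictionErrorWeights, hs]

theorem exists_eq_of_predictionErrorWeights_ne_zero {t x : X} {s : ι → X} {a : ι → ℝ} (hx : x ≠ t)
    (h : predictionErrorWeights t s a x ≠ 0) : ∃ j, s j = x := by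
  contrapose! h
  simp [predictionErrorWeights, hx.symm, h]

theorem kernelForm_predictionErrorWeights {k : Matrix X X ℝ} (hk : k.IsSymm) (t : X) (s : ι → X)
    (a : ι → ℝ) :
    kernelForm k (predictionErrorWeights t s a) (predictionErrorWeights t s a) =
      k t t - 2 * ∑ j, a j * k t (s j) + ∑ i, ∑ j, a i * a j * k (s i) (s j) := by
  simp only [predictionErrorWeights, map_sub, map_sum, LinearMap.sub_apply, LinearMap.sum_apply,
    kernelForm_single_single, hk.apply t, one_mul, mul_one]
  rw [Finset.sum_sub_distrib, Finset.sum_comm]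
  ring

end PredictionError

section BifractionalBrownianMotion

theorem exists_mul_sq_le_kernelForm_bifractionalKernel {α : ℝ} (hα : 0 < α) (hα2 : α < 2) :
    ∃ d > 0, ∀ (K : ℝ) (c : ℝ →₀ ℝ) (t r : ℝ), 0 < K → K ≤ 1 → t ≠ 0 → 0 ≤ r → r ≤ |t| →
      (∀ s ≠ t, c s ≠ 0 → r ≤ |t - s|) →
        (d * r ^ α) ^ K * c t ^ 2 ≤
          kernelForm (bifractionalKernel (circulant fun x => |x| ^ α) 0 K) c c := by
  obtain ⟨d, hd, hloc⟩ := exists_localization_abs_rpow hα hα2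
  refine ⟨d, hd, fun K c t r hK hK1 ht hr hrt hc => ?_⟩
  obtain ⟨ψ, hψ, hψ0, hψr, hneg⟩ := hloc r hr
  have hbound := rpow_apply_self_mul_sq_le_kernelForm hK hK1 hψ hneg
    (fun x y => rpow_nonneg (abs_nonneg _) _) (o := 0) (t := t) (c := c) (by simp [hα.ne'])
    (by simp [hα.ne']) ht (hψr _ (by simpa using hrt)) fun s hs => ?_
  · simpa [hψ0] using hbound
  · rcases eq_or_ne (c s) 0 with hcs | hcs
    · rw [hcs, zero_mul]
    · rw [circulant_apply, hψr _ (hc s hs hcs), mul_zero]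

theorem Rbifbm_eq_bifractionalKernel {t s : ℝ} (ht : 0 ≤ t) (hs : 0 ≤ s) (H₀ K₀ : ℝ) :
    Rbifbm H₀ K₀ t s =
      2 ^ (-K₀) * bifractionalKernel (circulant fun x => |x| ^ (2 * H₀)) 0 K₀ t s := by
  simp [Rbifbm, bifractionalKernel, ht, hs, rpow_mul]

theorem Rbifbm_predictionError_eq_kernelForm {ι : Type*} [Fintype ι] {s : ι → ℝ} {t : ℝ}
    (hs : ∀ j, 0 ≤ s j) (ht : 0 ≤ t) (a : ι → ℝ) (H₀ K₀ : ℝ) :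
    Rbifbm H₀ K₀ t t - 2 * ∑ j, a j * Rbifbm H₀ K₀ t (s j) +
        ∑ i, ∑ j, a i * a j * Rbifbm H₀ K₀ (s i) (s j) =
      2 ^ (-K₀) * kernelForm (bifractionalKernel (circulant fun x => |x| ^ (2 * H₀)) 0 K₀)
        (predictionErrorWeights t s a) (predictionErrorWeights t s a) := by
  have hsymm : (circulant fun x : ℝ => |x| ^ (2 * H₀)).IsSymm :=
    IsSymm.ext fun x y => by simp only [circulant_apply, abs_sub_comm]
  rw [kernelForm_predictionErrorWeights (isSymm_bifractionalKernel hsymm 0 K₀)]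
  simp only [Rbifbm_eq_bifractionalKernel, ht, hs, mul_add, mul_sub, Finset.mul_sum,
    mul_left_comm]

theorem exists_mul_rpow_le_Rbifbm_predictionError {H₀ K₀ : ℝ} (hH₀ : H₀ ∈ Ioo 0 1)
    (hK₀ : K₀ ∈ Ioc 0 1) :
    ∃ κ > 0, ∀ (ι : Type*) [Fintype ι] (s : ι → ℝ) (t r : ℝ), (∀ j, 0 ≤ s j) → 0 < t → 0 ≤ r →
      r ≤ t → (∀ j, r ≤ |t - s j|) → ∀ a : ι → ℝ,
        κ * r ^ (2 * (H₀ * K₀)) ≤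
          Rbifbm H₀ K₀ t t - 2 * ∑ j, a j * Rbifbm H₀ K₀ t (s j) +
            ∑ i, ∑ j, a i * a j * Rbifbm H₀ K₀ (s i) (s j) := by
  obtain ⟨d, hd, hbound⟩ := exists_mul_sq_le_kernelForm_bifractionalKernel (α := 2 * H₀)
    (by linarith [hH₀.1]) (by linarith [hH₀.2])
  refine ⟨2 ^ (-K₀) * d ^ K₀, by positivity, fun ι _ s t r hs ht hr hrt hrs a => ?_⟩
  rw [Rbifbm_predictionError_eq_kernelForm hs ht.le, mul_assoc, ← mul_assoc 2 H₀, rpow_mul hr,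
    ← mul_rpow hd.le (rpow_nonneg hr _)]
  gcongr
  have hkernel := hbound K₀ (predictionErrorWeights t s a) t r hK₀.1 hK₀.2 ht.ne' hr
    (hrt.trans (le_abs_self t)) fun x hx hne => by
      obtain ⟨j, rfl⟩ := exists_eq_of_predictionErrorWeights_ne_zero hx hne
      exact hrs j
  rcases hr.eq_or_lt with rfl | hr
  · refine le_trans (le_of_eq ?_) ((mul_nonneg (by positivity) (sq_nonneg _)).trans hkernel)
    simp [zero_rpow, hH₀.1.ne', hK₀.1.ne']
  · have hst (j : ι) : s j ≠ t := fun h => by simpa [h] using hr.trans_le (hrs j)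
    rwa [predictionErrorWeights_apply_self hst, one_pow, mul_one] at hkernel

end BifractionalBrownianMotion

/-- Corollary 6.2. Bi-fractional Brownian motion satisfies strong local
nondeterminism with index `H = H₀K₀`: there is `κ > 0` such that for all `m ≥ 1`,
`0 < s₁,…,s_m, t` and all `a ∈ ℝ^m`, the prediction-error quadratic form of the kernel `R`
is at least `κ · min{|t−s₁|^{2H},…,|t−s_m|^{2H}, t^{2H}}`. -/
theorem stmt_18 (H₀ K₀ : ℝ) (hH₀ : H₀ ∈ Set.Ioo (0 : ℝ) 1) (hK₀ : K₀ ∈ Set.Ioc (0 : ℝ) 1) :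
    ∃ κ : ℝ, 0 < κ ∧ ∀ (m : ℕ) (s : Fin (m + 1) → ℝ) (t : ℝ),
      (∀ j, 0 < s j) → 0 < t → ∀ a : Fin (m + 1) → ℝ,
        κ * min
            (Finset.univ.inf' Finset.univ_nonempty fun j => |t - s j| ^ (2 * (H₀ * K₀)))
            (t ^ (2 * (H₀ * K₀))) ≤
          Rbifbm H₀ K₀ t t - 2 * ∑ j, a j * Rbifbm H₀ K₀ t (s j) +
            ∑ i, ∑ j, a i * a j * Rbifbm H₀ K₀ (s i) (s j) := by
  obtain ⟨κ, hκ, hbound⟩ := exists_mul_rpow_le_Rbifbm_predictionError hH₀ hK₀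
  refine ⟨κ, hκ, fun m s t hs ht a => ?_⟩
  have hH : 0 < 2 * (H₀ * K₀) := mul_pos two_pos (mul_pos hH₀.1 hK₀.1)
  set M := min (Finset.univ.inf' Finset.univ_nonempty fun j => |t - s j| ^ (2 * (H₀ * K₀)))
    (t ^ (2 * (H₀ * K₀)))
  have hM : 0 ≤ M := le_min (Finset.le_inf' _ _ fun j _ => by positivity) (by positivity)
  rw [← rpow_inv_rpow hM hH.ne']
  refine hbound _ s t _ (fun j => (hs j).le) ht (by positivity) ?_ (fun j => ?_) a
  · exact (rpow_inv_le_iff_of_pos hM ht.le hH).2 (min_le_right _ _)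
  · exact (rpow_inv_le_iff_of_pos hM (abs_nonneg _) hH).2
      ((min_le_left _ _).trans (Finset.inf'_le _ (Finset.mem_univ j)))
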